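/- Assume persistent connectivity and that 𝐫(t) is finite for all t. Fix p ∈ ℕ. Let q ∈ {0,…,⌊n/2⌋−1}, τ ∈ [t_p, t_p^q], and l ∈ {1,…,n−1} with y_l(τ) < y_{l+1}(τ). Then there exist m ∈ {1,…,l} and τ′ ∈ [t_p, t_p^{q+1}] such that y_m(τ′) − y_m(τ) ≥ (𝐫(t_{p+1})^{m−(l+1)} / (4n)) · (y_{l+1}(τ) − y_l(τ)). -/

import Mathlib

/-!
Write `y_i` for the sorted positions, `R = 𝐫(t_{p+1}) ≥ 1`, `T = t_p^{q+1}`, and consider the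
weighted sums `S_k = ∑_{i ≤ k} R^{-i} y_i` of the `k` lowest positions (`wsum`).

The order statistics `y_i` are absolutely continuous, and almost everywhere each moves with the
velocity of the agent occupying it (`ae_hasDerivAt_sorted`). Hence `S_k'` is a linear functional of
the sorted vector which kills constants, and it suffices to evaluate it on step vectors
(`linear_nonneg_of_step`). On the step at `k' < k`, the positive part is at least `R^{-k'}` times
the flow into the `k'` lowest agents and the negative part is at most `R^{-(k'+1)}` times the
opposite flow; these compare by the definition of `R`. Thus `S_k` is nondecreasing (`wsum_mono`).
Keeping the step at `k` as well, `S_k'` is at least `R^{-k}` times the flow into the `k` lowest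
agents times the gap `y_{k+1} - y_k` (`wsum_growth`).

Suppose that every `y_m`, `m ≤ l`, moves by less than the asserted amount on `[τ, T]`. With `G` the
gap at time `τ`, summing gives `S_l(t) - S_l(τ) ≤ R^{-(l+1)} G / 4`. As `S_{l+1}` is nondecreasing,
`y_{l+1}` falls by at most `G / 4`, while `y_l` rises by at most `G / 4`; so the gap stays at least
`G / 2` and the set of the `l` lowest agents is constant (`low_set_const`). The flow into that set
over `[t_p^q, T]` is at least one (`nextTime_spec`, which uses persistent connectivity), so `S_l`
grows by at least `R^{-l} G / 2`, a contradiction.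
-/

open MeasureTheory Filter Finset
open scoped ENNReal

/-- Interaction weights: non-negative, measurable, integrable on bounded intervals. -/
def IsWeight (n : ℕ) (a : Fin n → Fin n → ℝ → ℝ) : Prop :=
  ∀ i j : Fin n, (∀ t, 0 ≤ a i j t) ∧ Measurable (a i j) ∧
    ∀ T : ℝ, IntervalIntegrable (a i j) MeasureTheory.volume 0 T

/-- A trajectory of the continuous-time consensus system: a (locally absolutely) continuous
function satisfying the Carathéodory integral equation. -/
def IsTrajectory (n : ℕ) (a : Fin n → Fin n → ℝ → ℝ) (x : ℝ → Fin n → ℝ) : Prop :=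
  (∀ i : Fin n, ContinuousOn (fun t => x t i) (Set.Ici (0:ℝ))) ∧
  (∀ i : Fin n, ∀ t : ℝ, 0 ≤ t →
    IntervalIntegrable (fun s => ∑ j : Fin n, a i j s * (x s j - x s i))
      MeasureTheory.volume 0 t ∧
    x t i = x 0 i + ∫ s in (0:ℝ)..t, ∑ j : Fin n, a i j s * (x s j - x s i))

/-- Group diameter Δ_N(t). -/
noncomputable def diam (n : ℕ) (x : ℝ → Fin n → ℝ) (t : ℝ) : ℝ :=
  (⨆ i, x t i) - (⨅ i, x t i)

/-- Persistent connectivity: the graph with edge (j,i) whenever ∫_0^∞ a_{ij} = ∞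
is strongly connected. -/
def PersistentConn (n : ℕ) (a : Fin n → Fin n → ℝ → ℝ) : Prop :=
  ∀ u v : Fin n, Relation.ReflTransGen
    (fun j i => ∫⁻ s in Set.Ioi (0:ℝ), ENNReal.ofReal (a i j s) = ⊤) u v

noncomputable def cutSum (n : ℕ) (a : Fin n → Fin n → ℝ → ℝ)
    (S : Finset (Fin n)) (t0 t : ℝ) : ℝ :=
  ∑ i ∈ S, ∑ j ∈ Sᶜ, ∫ s in t0..t, a i j s

noncomputable def minCut (n : ℕ) (a : Fin n → Fin n → ℝ → ℝ) (t0 t : ℝ) : ℝ :=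
  sInf ((fun S => cutSum n a S t0 t) '' {S : Finset (Fin n) | S.Nonempty ∧ S ≠ Finset.univ})

/-- The smallest `t ≥ t0` with `minCut n a t0 t = 1`. -/
noncomputable def nextTime (n : ℕ) (a : Fin n → Fin n → ℝ → ℝ) (t0 : ℝ) : ℝ :=
  sInf {t : ℝ | t0 ≤ t ∧ minCut n a t0 t = 1}

/-- The rescaling sequence (t_p): t_0 = 0 and t_{p+1} is obtained from t_p by ⌊n/2⌋
steps of `nextTime`. -/
noncomputable def tpSeq (n : ℕ) (a : Fin n → Fin n → ℝ → ℝ) : ℕ → ℝ :=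
  fun p => ((nextTime n a)^[n/2])^[p] 0

/-- Intermediate times t_p^q. -/
noncomputable def tpq (n : ℕ) (a : Fin n → Fin n → ℝ → ℝ) (p q : ℕ) : ℝ :=
  (nextTime n a)^[q] (tpSeq n a p)

open Classical in
/-- The ratio r_S(t) of reciprocal interaction weights across the cut (S, N∖S). -/
noncomputable def rS (n : ℕ) (a : Fin n → Fin n → ℝ → ℝ) (S : Finset (Fin n)) (t : ℝ) : ℝ≥0∞ :=
  if 0 < ∑ i ∈ S, ∑ j ∈ Sᶜ, a j i t then
    ENNReal.ofReal ((∑ i ∈ S, ∑ j ∈ Sᶜ, a i j t) / (∑ i ∈ S, ∑ j ∈ Sᶜ, a j i t))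
  else if (∑ i ∈ S, ∑ j ∈ Sᶜ, a i j t) = 0 then 1 else ⊤

/-- r(t): maximal ratio over nonempty proper subsets. -/
noncomputable def rmax (n : ℕ) (a : Fin n → Fin n → ℝ → ℝ) (t : ℝ) : ℝ≥0∞ :=
  ⨆ S ∈ {S : Finset (Fin n) | S.Nonempty ∧ S ≠ Finset.univ}, rS n a S t

/-- 𝐫(t) = sup_{s ∈ [0,t]} r(s). -/
noncomputable def rbold (n : ℕ) (a : Fin n → Fin n → ℝ → ℝ) (t : ℝ) : ℝ≥0∞ :=
  ⨆ s ∈ Set.Icc (0:ℝ) t, rmax n a s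

/-- σ_t sorts the pairs (x_i(t), i) lexicographically. -/
def IsSortingPerm (n : ℕ) (x : ℝ → Fin n → ℝ) (σ : ℝ → Equiv.Perm (Fin n)) : Prop :=
  ∀ t : ℝ, ∀ i j : Fin n, i < j →
    x t (σ t i) < x t (σ t j) ∨ (x t (σ t i) = x t (σ t j) ∧ σ t i < σ t j)

/-! ### The rescaling times are attained -/

lemma IsWeight.intervalIntegrable {n : ℕ} {a : Fin n → Fin n → ℝ → ℝ} (ha : IsWeight n a)
    (i j : Fin n) (s t : ℝ) : IntervalIntegrable (a i j) volume s t :=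
  ((ha i j).2.2 s).symm.trans ((ha i j).2.2 t)

lemma continuous_cutSum {n : ℕ} {a : Fin n → Fin n → ℝ → ℝ} (ha : IsWeight n a)
    (S : Finset (Fin n)) (t0 : ℝ) : Continuous (cutSum n a S t0) := by
  unfold cutSum
  refine continuous_finsetSum _ fun i _ => continuous_finsetSum _ fun j _ => ?_
  exact intervalIntegral.continuous_primitive (fun s t => ha.intervalIntegrable i j s t) t0

lemma cutSum_mono {n : ℕ} {a : Fin n → Fin n → ℝ → ℝ} (ha : IsWeight n a)
    (S : Finset (Fin n)) {s0 t0 t t' : ℝ} (h0 : s0 ≤ t0) (h1 : t0 ≤ t) (h2 : t ≤ t') :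
    cutSum n a S t0 t ≤ cutSum n a S s0 t' := by
  unfold cutSum
  refine Finset.sum_le_sum fun i _ => Finset.sum_le_sum fun j _ => ?_
  exact intervalIntegral.integral_mono_interval h0 h1 h2
    (Eventually.of_forall fun s => (ha i j).1 s) (ha.intervalIntegrable i j _ _)

/-- Every cut is crossed, towards `S`, by a pair of agents with infinite total interaction. -/
lemma exists_crossing_edge {n : ℕ} {a : Fin n → Fin n → ℝ → ℝ} (hconn : PersistentConn n a)
    {S : Finset (Fin n)} (hne : S.Nonempty) (hS : S ≠ Finset.univ) :
    ∃ i ∈ S, ∃ j ∈ Sᶜ, ∫⁻ s in Set.Ioi (0:ℝ), ENNReal.ofReal (a i j s) = ⊤ := by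
  obtain ⟨v, hv⟩ := hne
  obtain ⟨u, hu⟩ : ∃ u, u ∉ S := by
    by_contra! h
    exact hS (Finset.eq_univ_iff_forall.2 h)
  by_contra! hcon
  have key : ∀ w, Relation.ReflTransGen
      (fun j i => ∫⁻ s in Set.Ioi (0:ℝ), ENNReal.ofReal (a i j s) = ⊤) u w → w ∉ S := by
    intro w hw
    induction hw with
    | refl => exact hu
    | tail _ hbc ih => exact fun hc => hcon _ hc _ (Finset.mem_compl.2 ih) hbc
  exact key v (hconn u v) hv

lemma exists_integral_ge {n : ℕ} {a : Fin n → Fin n → ℝ → ℝ} (ha : IsWeight n a)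
    {i j : Fin n} (h : ∫⁻ s in Set.Ioi (0:ℝ), ENNReal.ofReal (a i j s) = ⊤) (C : ℝ) :
    ∃ T, C ≤ ∫ s in (0:ℝ)..T, a i j s := by
  by_contra! hcon
  have hint : IntegrableOn (a i j) (Set.Ioi 0) := by
    refine integrableOn_Ioi_of_intervalIntegral_norm_bounded (l := atTop) (b := id) C 0
      (fun k => ?_) tendsto_id ?_
    · exact (intervalIntegrable_iff.1 (ha.intervalIntegrable i j 0 k)).mono_set
        (by intro z hz; exact Set.Ioc_subset_uIoc hz)
    · filter_upwards with T
      refine le_trans (le_of_eq ?_) (hcon T).le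
      refine intervalIntegral.integral_congr fun s _ => ?_
      simp [Real.norm_eq_abs, abs_of_nonneg ((ha i j).1 s)]
  have := hint.lintegral_lt_top
  exact absurd h this.ne

lemma exists_cutSum_ge {n : ℕ} {a : Fin n → Fin n → ℝ → ℝ} (ha : IsWeight n a)
    (hconn : PersistentConn n a) {S : Finset (Fin n)} (hne : S.Nonempty) (hS : S ≠ Finset.univ)
    (t0 : ℝ) : ∃ T, t0 ≤ T ∧ 1 ≤ cutSum n a S t0 T := by
  obtain ⟨i, hi, j, hj, hij⟩ := exists_crossing_edge hconn hne hS
  obtain ⟨T, hT⟩ := exists_integral_ge ha hij (1 + ∫ s in (0:ℝ)..t0, a i j s)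
  have hmono : ∫ s in t0..T, a i j s ≤ ∫ s in t0..max t0 T, a i j s := by
    rcases le_total t0 T with h | h
    · rw [max_eq_right h]
    · rw [max_eq_left h, intervalIntegral.integral_same, intervalIntegral.integral_symm]
      have := intervalIntegral.integral_nonneg (μ := volume) h (fun s _ => (ha i j).1 s)
      linarith
  have hsub := intervalIntegral.integral_add_adjacent_intervals
    (ha.intervalIntegrable i j 0 t0) (ha.intervalIntegrable i j t0 T)
  have hnn : ∀ i j, 0 ≤ ∫ s in t0..max t0 T, a i j s := fun i j =>
    intervalIntegral.integral_nonneg (le_max_left _ _) (fun s _ => (ha i j).1 s)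
  refine ⟨max t0 T, le_max_left _ _, ?_⟩
  calc (1:ℝ) ≤ ∫ s in t0..max t0 T, a i j s := by linarith
    _ ≤ ∑ j ∈ Sᶜ, ∫ s in t0..max t0 T, a i j s :=
        Finset.single_le_sum (f := fun j => ∫ s in t0..max t0 T, a i j s) (fun j _ => hnn i j) hj
    _ ≤ cutSum n a S t0 (max t0 T) :=
        Finset.single_le_sum (f := fun i => ∑ j ∈ Sᶜ, ∫ s in t0..max t0 T, a i j s)
          (fun i _ => Finset.sum_nonneg fun j _ => hnn i j) hi

lemma exists_proper_set {n : ℕ} (hn : 2 ≤ n) :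
    ({⟨0, by omega⟩} : Finset (Fin n)).Nonempty ∧
      ({⟨0, by omega⟩} : Finset (Fin n)) ≠ Finset.univ := by
  refine ⟨Finset.singleton_nonempty _, fun h => ?_⟩
  have := congrArg Finset.card h
  simp at this
  omega

lemma continuous_minCut {n : ℕ} (hn : 2 ≤ n) {a : Fin n → Fin n → ℝ → ℝ} (ha : IsWeight n a)
    (t0 : ℝ) : Continuous (minCut n a t0) := by
  classical
  let F : Finset (Finset (Fin n)) := Finset.univ.filter fun S => S.Nonempty ∧ S ≠ Finset.univ
  have hF : F.Nonempty := ⟨_, Finset.mem_filter.2 ⟨Finset.mem_univ _, exists_proper_set hn⟩⟩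
  have heq : minCut n a t0 = fun t => F.inf' hF fun S => cutSum n a S t0 t := by
    funext t
    rw [Finset.inf'_eq_csInf_image, minCut]
    congr 2
    ext S
    simp [F]
  rw [heq]
  exact Continuous.finset_inf'_apply hF fun S _ => continuous_cutSum ha S t0

lemma minCut_le {n : ℕ} {a : Fin n → Fin n → ℝ → ℝ} {S : Finset (Fin n)} (hne : S.Nonempty)
    (hS : S ≠ Finset.univ) (t0 t : ℝ) : minCut n a t0 t ≤ cutSum n a S t0 t :=
  csInf_le ((Set.toFinite _).image _).bddBelow ⟨S, ⟨hne, hS⟩, rfl⟩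

lemma le_minCut {n : ℕ} (hn : 2 ≤ n) {a : Fin n → Fin n → ℝ → ℝ} {t0 t C : ℝ}
    (h : ∀ S : Finset (Fin n), S.Nonempty → S ≠ Finset.univ → C ≤ cutSum n a S t0 t) :
    C ≤ minCut n a t0 t := by
  refine le_csInf ⟨_, _, exists_proper_set hn, rfl⟩ ?_
  rintro _ ⟨S, ⟨h1, h2⟩, rfl⟩
  exact h S h1 h2

/-- Persistent connectivity makes `nextTime` genuinely attained. -/
lemma nextTime_spec {n : ℕ} (hn : 2 ≤ n) {a : Fin n → Fin n → ℝ → ℝ} (ha : IsWeight n a)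
    (hconn : PersistentConn n a) (t0 : ℝ) :
    t0 ≤ nextTime n a t0 ∧ minCut n a t0 (nextTime n a t0) = 1 := by
  have hc := continuous_minCut hn ha t0
  have hT : ∀ S : Finset (Fin n), ∃ T, t0 ≤ T ∧
      (S.Nonempty → S ≠ Finset.univ → 1 ≤ cutSum n a S t0 T) := by
    intro S
    by_cases h : S.Nonempty ∧ S ≠ Finset.univ
    · obtain ⟨T, h1, h2⟩ := exists_cutSum_ge ha hconn h.1 h.2 t0
      exact ⟨T, h1, fun _ _ => h2⟩
    · exact ⟨t0, le_rfl, fun h1 h2 => absurd ⟨h1, h2⟩ h⟩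
  choose T hT1 hT2 using hT
  obtain ⟨M, hM⟩ := (Set.finite_range T).bddAbove
  have hTM : ∀ S, T S ≤ M := fun S => hM ⟨S, rfl⟩
  have ht0M : t0 ≤ M := (hT1 ∅).trans (hTM ∅)
  have h0 : minCut n a t0 t0 ≤ 1 := by
    refine (minCut_le (exists_proper_set hn).1 (exists_proper_set hn).2 t0 t0).trans ?_
    simp [cutSum]
  have h1 : 1 ≤ minCut n a t0 M := le_minCut hn fun S hne hS =>
    (hT2 S hne hS).trans (cutSum_mono ha S le_rfl (hT1 S) (hTM S))
  obtain ⟨t, ht, hmt⟩ := intermediate_value_Icc ht0M hc.continuousOn ⟨h0, h1⟩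
  have hclosed : IsClosed {t : ℝ | t0 ≤ t ∧ minCut n a t0 t = 1} :=
    (isClosed_Ici (a := t0)).inter (isClosed_singleton.preimage hc)
  exact hclosed.csInf_mem ⟨t, ht.1, hmt⟩ ⟨t0, fun s hs => hs.1⟩

lemma le_iterate_nextTime {n : ℕ} (hn : 2 ≤ n) {a : Fin n → Fin n → ℝ → ℝ} (ha : IsWeight n a)
    (hconn : PersistentConn n a) (t0 : ℝ) : Monotone fun k => (nextTime n a)^[k] t0 := by
  refine monotone_nat_of_le_succ fun k => ?_
  simp only [Function.iterate_succ_apply']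
  exact (nextTime_spec hn ha hconn _).1

lemma tpSeq_nonneg {n : ℕ} (hn : 2 ≤ n) {a : Fin n → Fin n → ℝ → ℝ} (ha : IsWeight n a)
    (hconn : PersistentConn n a) (p : ℕ) : 0 ≤ tpSeq n a p := by
  unfold tpSeq
  rw [← Function.iterate_mul]
  exact le_iterate_nextTime hn ha hconn 0 (Nat.zero_le _)

lemma tpSeq_succ (n : ℕ) (a : Fin n → Fin n → ℝ → ℝ) (p : ℕ) :
    tpSeq n a (p + 1) = tpq n a p (n / 2) := by
  simp only [tpSeq, tpq, Function.iterate_succ_apply']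

/-! ### The ratio bound -/

/-- Cut balance: a bound on `rS` turns into an inequality between the two flows of a cut. -/
lemma flow_le_of_rS_le {n : ℕ} {a : Fin n → Fin n → ℝ → ℝ} (ha : IsWeight n a)
    {S : Finset (Fin n)} {t : ℝ} {ρ : ℝ≥0∞} (hρ : ρ ≠ ⊤) (h : rS n a S t ≤ ρ) :
    ∑ i ∈ S, ∑ j ∈ Sᶜ, a i j t ≤ ρ.toReal * ∑ i ∈ S, ∑ j ∈ Sᶜ, a j i t := by
  have hA : 0 ≤ ∑ i ∈ S, ∑ j ∈ Sᶜ, a i j t :=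
    Finset.sum_nonneg fun i _ => Finset.sum_nonneg fun j _ => (ha i j).1 t
  have hB : 0 ≤ ∑ i ∈ S, ∑ j ∈ Sᶜ, a j i t :=
    Finset.sum_nonneg fun i _ => Finset.sum_nonneg fun j _ => (ha j i).1 t
  unfold rS at h
  split_ifs at h with h1 h2
  · have := ENNReal.toReal_mono hρ h
    rw [ENNReal.toReal_ofReal (div_nonneg hA hB), div_le_iff₀ h1] at this
    exact this
  · rw [h2]
    exact mul_nonneg ENNReal.toReal_nonneg hB
  · exact absurd (top_le_iff.1 h) hρ

lemma rS_le_rbold {n : ℕ} {a : Fin n → Fin n → ℝ → ℝ} {S : Finset (Fin n)} (hne : S.Nonempty)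
    (hS : S ≠ Finset.univ) {s t : ℝ} (hs : s ∈ Set.Icc 0 t) : rS n a S s ≤ rbold n a t := by
  unfold rbold rmax
  exact le_trans (le_iSup₂ (f := fun (S : Finset (Fin n))
    (_ : S ∈ {S : Finset (Fin n) | S.Nonempty ∧ S ≠ Finset.univ}) => rS n a S s) S ⟨hne, hS⟩)
    (le_iSup₂ (f := fun (s : ℝ) (_ : s ∈ Set.Icc (0:ℝ) t) =>
      ⨆ S ∈ {S : Finset (Fin n) | S.Nonempty ∧ S ≠ Finset.univ}, rS n a S s) s hs)

/-- The ratios of a cut and of its complement are inverse to each other, so the maximal ratio is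
at least one. -/
lemma one_le_rbold {n : ℕ} (hn : 2 ≤ n) {a : Fin n → Fin n → ℝ → ℝ} (ha : IsWeight n a)
    {t : ℝ} (ht : 0 ≤ t) (hfin : rbold n a t ≠ ⊤) : 1 ≤ (rbold n a t).toReal := by
  obtain ⟨hne, hS⟩ := exists_proper_set hn
  set S : Finset (Fin n) := {⟨0, by omega⟩}
  have hne' : Sᶜ.Nonempty := Finset.compl_ne_univ_iff_nonempty Sᶜ |>.1 (by simpa using hS)
  have hS' : Sᶜ ≠ Finset.univ := (Finset.compl_ne_univ_iff_nonempty S).2 hne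
  have h0 : (0:ℝ) ∈ Set.Icc 0 t := ⟨le_rfl, ht⟩
  have h1 := rS_le_rbold (a := a) hne hS h0
  have e1 := flow_le_of_rS_le ha hfin h1
  have e2 := flow_le_of_rS_le ha hfin (rS_le_rbold (a := a) hne' hS' h0)
  rw [compl_compl, Finset.sum_comm, Finset.sum_comm (s := Sᶜ) (t := S)] at e2
  set A := ∑ i ∈ S, ∑ j ∈ Sᶜ, a i j 0
  set B := ∑ i ∈ S, ∑ j ∈ Sᶜ, a j i 0 with hBdef
  have hA : 0 ≤ A := Finset.sum_nonneg fun i _ => Finset.sum_nonneg fun j _ => (ha i j).1 0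
  have hB : 0 ≤ B := Finset.sum_nonneg fun i _ => Finset.sum_nonneg fun j _ => (ha j i).1 0
  by_cases hz : A + B = 0
  · have hA0 : A = 0 := by linarith
    have hB0 : B = 0 := by linarith
    have : rS n a S 0 = 1 := by
      unfold rS
      rw [if_neg (by rw [← hBdef, hB0]; exact lt_irrefl _), if_pos hA0]
    rw [this] at h1
    simpa using ENNReal.toReal_mono hfin h1
  · have hpos : 0 < A + B := lt_of_le_of_ne (by linarith) (Ne.symm hz)
    by_contra! hlt
    nlinarith

/-! ### Cut balance and weighted sums of a monotone vector -/

/-- The step function `1_{k ≤ ·}` on `Fin n`. -/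
def stepFn (n k : ℕ) : Fin n → ℝ := fun i => if k ≤ (i : ℕ) then 1 else 0

/-- A linear functional that kills constants and is nonnegative on the step functions
`1_{k ≤ ·}`, `1 ≤ k < n`, is nonnegative on monotone vectors: a monotone vector is a constant plus
a nonnegative combination of steps. -/
lemma linear_nonneg_of_step {n : ℕ} (L : (Fin n → ℝ) →ₗ[ℝ] ℝ) (hconst : L (fun _ => 1) = 0)
    (hstep : ∀ k, 1 ≤ k → k < n → 0 ≤ L (stepFn n k)) {y : Fin n → ℝ} (hy : Monotone y) :
    0 ≤ L y := by
  rcases Nat.eq_zero_or_pos n with rfl | hn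
  · have : y = 0 := Subsingleton.elim _ _
    rw [this, map_zero]
  let z : ℕ → ℝ := fun k => if h : k < n then y ⟨k, h⟩ else 0
  have hz : ∀ k (h : k < n), z k = y ⟨k, h⟩ := fun k h => dif_pos h
  have hdec : y = (z 0) • (fun _ => (1:ℝ)) +
      ∑ k ∈ Finset.range (n - 1), (z (k + 1) - z k) • stepFn n (k + 1) := by
    funext i
    simp only [Pi.add_apply, Pi.smul_apply, Finset.sum_apply, smul_eq_mul, mul_one, stepFn,
      mul_ite, mul_zero]
    rw [← Finset.sum_filter]
    have : (Finset.range (n - 1)).filter (fun k => k + 1 ≤ (i : ℕ)) = Finset.range i := by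
      ext k
      simp only [Finset.mem_filter, Finset.mem_range]
      omega
    rw [this, Finset.sum_range_sub, hz i i.2]
    ring
  rw [hdec, map_add, map_smul, hconst, map_sum]
  simp only [map_smul, smul_eq_mul, mul_zero, zero_add]
  refine Finset.sum_nonneg fun k hk => ?_
  have hk' : k + 1 < n := by
    have := Finset.mem_range.1 hk
    omega
  refine mul_nonneg ?_ (hstep (k + 1) (by omega) hk')
  rw [hz _ hk', hz k (by omega), sub_nonneg]
  exact hy (by simp [Fin.le_def])

/-- The indices `i < k` of `Fin n`. -/
def low (n k : ℕ) : Finset (Fin n) := Finset.univ.filter fun i => (i : ℕ) < k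

lemma mem_low {n k : ℕ} {i : Fin n} : i ∈ low n k ↔ (i : ℕ) < k := by simp [low]

/-- Flow into the sorted positions below `k` from those above. -/
def inFlow {n : ℕ} (b : Fin n → Fin n → ℝ) (k : ℕ) : ℝ := ∑ i ∈ low n k, ∑ j ∈ (low n k)ᶜ, b i j

/-- Flow into the sorted positions above `k` from those below. -/
def outFlow {n : ℕ} (b : Fin n → Fin n → ℝ) (k : ℕ) : ℝ := ∑ i ∈ low n k, ∑ j ∈ (low n k)ᶜ, b j i

/-- Evaluation on a step: only pairs separated by the step contribute. -/
lemma weighted_step_eq {n : ℕ} (b : Fin n → Fin n → ℝ) (W : Fin n → ℝ) (k : ℕ) :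
    ∑ i, W i * ∑ j, b i j * (stepFn n k j - stepFn n k i) =
      ∑ i ∈ low n k, W i * ∑ j ∈ (low n k)ᶜ, b i j -
      ∑ i ∈ (low n k)ᶜ, W i * ∑ j ∈ low n k, b i j := by
  rw [← Finset.sum_add_sum_compl (low n k), sub_eq_add_neg, ← Finset.sum_neg_distrib]
  congr 1
  · refine Finset.sum_congr rfl fun i hi => ?_
    rw [mem_low] at hi
    congr 1
    rw [← Finset.sum_add_sum_compl (low n k)]
    rw [Finset.sum_eq_zero, zero_add]
    · refine Finset.sum_congr rfl fun j hj => ?_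
      rw [Finset.mem_compl, mem_low] at hj
      simp [stepFn, not_lt.1 hj, not_le.2 hi]
    · intro j hj
      rw [mem_low] at hj
      simp [stepFn, not_le.2 hj, not_le.2 hi]
  · refine Finset.sum_congr rfl fun i hi => ?_
    rw [Finset.mem_compl, mem_low] at hi
    rw [← mul_neg]
    congr 1
    rw [← Finset.sum_add_sum_compl (low n k), add_comm]
    rw [Finset.sum_eq_zero, zero_add, ← Finset.sum_neg_distrib]
    · refine Finset.sum_congr rfl fun j hj => ?_
      rw [mem_low] at hj
      simp [stepFn, not_lt.1 hi, not_le.2 hj]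
    · intro j hj
      rw [Finset.mem_compl, mem_low] at hj
      simp [stepFn, not_lt.1 hj, not_lt.1 hi]

/-- The weights `R^{-(i+1)}` on the `l` lowest positions, zero above. -/
noncomputable def wt (R : ℝ) (l : ℕ) {n : ℕ} (i : Fin n) : ℝ :=
  if (i : ℕ) < l then (R ^ ((i : ℕ) + 1))⁻¹ else 0

lemma wt_nonneg {R : ℝ} (hR : 1 ≤ R) (l : ℕ) {n : ℕ} (i : Fin n) : 0 ≤ wt R l i := by
  unfold wt
  split_ifs <;> positivity

lemma weighted_step_ge {n : ℕ} {b : Fin n → Fin n → ℝ} (hb : ∀ i j, 0 ≤ b i j) {R : ℝ}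
    (hR : 1 ≤ R) {l k : ℕ} (hbal : outFlow b k ≤ R * inFlow b k) :
    (if k = l then (R ^ l)⁻¹ * inFlow b l else 0) ≤
      ∑ i, wt R l i * ∑ j, b i j * (stepFn n k j - stepFn n k i) := by
  rw [weighted_step_eq]
  have hR0 : 0 < R := by linarith
  have hin : 0 ≤ inFlow b k := Finset.sum_nonneg fun i _ => Finset.sum_nonneg fun j _ => hb i j
  -- Each of the `k` lowest weights is at least `R^{-k}` when `k ≤ l`.
  have hlow : k ≤ l → (R ^ k)⁻¹ * inFlow b k ≤
      ∑ i ∈ low n k, wt R l i * ∑ j ∈ (low n k)ᶜ, b i j := by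
    intro hkl
    rw [inFlow, Finset.mul_sum]
    refine Finset.sum_le_sum fun i hi => ?_
    rw [mem_low] at hi
    refine mul_le_mul_of_nonneg_right ?_ (Finset.sum_nonneg fun j _ => hb i j)
    rw [wt, if_pos (by omega)]
    exact inv_anti₀ (by positivity) (pow_le_pow_right₀ hR (by omega))
  rcases lt_or_ge k l with hkl | hkl
  · rw [if_neg hkl.ne]
    have hup : ∑ i ∈ (low n k)ᶜ, wt R l i * ∑ j ∈ low n k, b i j ≤
        (R ^ (k + 1))⁻¹ * outFlow b k := by
      rw [outFlow, Finset.sum_comm, Finset.mul_sum]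
      refine Finset.sum_le_sum fun i hi => ?_
      rw [Finset.mem_compl, mem_low] at hi
      refine mul_le_mul_of_nonneg_right ?_ (Finset.sum_nonneg fun j _ => hb i j)
      unfold wt
      split_ifs
      · exact inv_anti₀ (by positivity) (pow_le_pow_right₀ hR (by omega))
      · positivity
    have h3 : (R ^ (k + 1))⁻¹ * outFlow b k ≤ (R ^ k)⁻¹ * inFlow b k := by
      calc (R ^ (k + 1))⁻¹ * outFlow b k ≤ (R ^ (k + 1))⁻¹ * (R * inFlow b k) := by gcongr
        _ = (R ^ k)⁻¹ * inFlow b k := by rw [pow_succ]; field_simp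
    linarith [hlow hkl.le]
  · have hz : ∑ i ∈ (low n k)ᶜ, wt R l i * ∑ j ∈ low n k, b i j = 0 := by
      refine Finset.sum_eq_zero fun i hi => ?_
      rw [Finset.mem_compl, mem_low] at hi
      rw [wt, if_neg (by omega), zero_mul]
    rw [hz, sub_zero]
    split_ifs with h
    · subst h
      exact hlow le_rfl
    · exact Finset.sum_nonneg fun i _ =>
        mul_nonneg (wt_nonneg hR l i) (Finset.sum_nonneg fun j _ => hb i j)

lemma weighted_nonneg {n : ℕ} {b : Fin n → Fin n → ℝ} (hb : ∀ i j, 0 ≤ b i j) {R : ℝ}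
    (hR : 1 ≤ R) (hbal : ∀ k, 1 ≤ k → k < n → outFlow b k ≤ R * inFlow b k) (l : ℕ)
    {y : Fin n → ℝ} (hy : Monotone y) :
    0 ≤ ∑ i, wt R l i * ∑ j, b i j * (y j - y i) := by
  let L : (Fin n → ℝ) →ₗ[ℝ] ℝ := ∑ i, wt R l i • ∑ j, b i j •
    ((LinearMap.proj j : (Fin n → ℝ) →ₗ[ℝ] ℝ) - LinearMap.proj i)
  have hL : ∀ z, L z = ∑ i, wt R l i * ∑ j, b i j * (z j - z i) := fun z => by
    simp [L, LinearMap.sum_apply]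
  rw [← hL]
  refine linear_nonneg_of_step L (by rw [hL]; simp) (fun k hk hkn => ?_) hy
  rw [hL]
  refine le_trans ?_ (weighted_step_ge hb hR (hbal k hk hkn))
  split_ifs
  · have : 0 ≤ inFlow b l := Finset.sum_nonneg fun i _ => Finset.sum_nonneg fun j _ => hb i j
    positivity
  · exact le_rfl

lemma weighted_ge_gap {n : ℕ} {b : Fin n → Fin n → ℝ} (hb : ∀ i j, 0 ≤ b i j) {R : ℝ}
    (hR : 1 ≤ R) (hbal : ∀ k, 1 ≤ k → k < n → outFlow b k ≤ R * inFlow b k) {l : ℕ}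
    (hl : 1 ≤ l) (hln : l < n) {y : Fin n → ℝ} (hy : Monotone y) :
    (R ^ l)⁻¹ * inFlow b l * (y ⟨l, hln⟩ - y ⟨l - 1, by omega⟩) ≤
      ∑ i, wt R l i * ∑ j, b i j * (y j - y i) := by
  let L : (Fin n → ℝ) →ₗ[ℝ] ℝ := (∑ i, wt R l i • ∑ j, b i j •
    ((LinearMap.proj j : (Fin n → ℝ) →ₗ[ℝ] ℝ) - LinearMap.proj i)) -
    ((R ^ l)⁻¹ * inFlow b l) • ((LinearMap.proj ⟨l, hln⟩ : (Fin n → ℝ) →ₗ[ℝ] ℝ) -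
      LinearMap.proj ⟨l - 1, by omega⟩)
  have hL : ∀ z, L z = (∑ i, wt R l i * ∑ j, b i j * (z j - z i)) -
      (R ^ l)⁻¹ * inFlow b l * (z ⟨l, hln⟩ - z ⟨l - 1, by omega⟩) := fun z => by
    simp [L, LinearMap.sum_apply]
  rw [← sub_nonneg, ← hL]
  refine linear_nonneg_of_step L (by rw [hL]; simp) (fun k hk hkn => ?_) hy
  rw [hL, sub_nonneg]
  refine le_trans (le_of_eq ?_) (weighted_step_ge hb hR (hbal k hk hkn))
  -- the gap of the step `1_{k ≤ ·}` at `l` is the indicator of `k = l`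
  simp only [stepFn]
  split_ifs <;> first | omega | simp

/-! ### Sorted trajectories -/

lemma IsSortingPerm.monotone {n : ℕ} {x : ℝ → Fin n → ℝ} {σ : ℝ → Equiv.Perm (Fin n)}
    (hσ : IsSortingPerm n x σ) (t : ℝ) : Monotone fun i => x t (σ t i) := by
  intro i j hij
  rcases hij.lt_or_eq with h | rfl
  · rcases hσ t i j h with h | h
    · exact h.le
    · exact h.1.le
  · exact le_rfl

/-- Among the `i + 1` lowest agents at time `s`, one has rank at least `i` at time `t`; it bounds
the increase of the `i`-th order statistic. -/
lemma exists_sorted_sub_le {n : ℕ} {x : ℝ → Fin n → ℝ} {σ : ℝ → Equiv.Perm (Fin n)}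
    (hσ : IsSortingPerm n x σ) (i : Fin n) (s t : ℝ) :
    ∃ j, x t (σ t i) - x s (σ s i) ≤ x t j - x s j := by
  by_contra! hcon
  have hmaps : ∀ k ∈ Finset.Iic i, (σ t).symm (σ s k) ∈ Finset.Iio i := by
    intro k hk
    rw [Finset.mem_Iic] at hk
    rw [Finset.mem_Iio]
    by_contra! hle
    have h1 := hσ.monotone t hle
    have h2 := hσ.monotone s hk
    simp only [Equiv.apply_symm_apply] at h1 h2
    linarith [hcon (σ s k)]
  have hcard := Finset.card_le_card_of_injOn _ hmaps
    (fun u _ v _ h => (σ s).injective ((σ t).symm.injective h))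
  rw [Fin.card_Iic, Fin.card_Iio] at hcard
  omega

lemma dist_sorted_le {n : ℕ} {x : ℝ → Fin n → ℝ} {σ : ℝ → Equiv.Perm (Fin n)}
    (hσ : IsSortingPerm n x σ) (i : Fin n) (s t : ℝ) :
    dist (x s (σ s i)) (x t (σ t i)) ≤ ∑ j, dist (x s j) (x t j) := by
  have hj : ∀ j, |x s j - x t j| ≤ ∑ j, dist (x s j) (x t j) := fun j =>
    Finset.single_le_sum (f := fun j => dist (x s j) (x t j)) (fun j _ => dist_nonneg)
      (Finset.mem_univ j)
  rw [Real.dist_eq, abs_le]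
  obtain ⟨j, h⟩ := exists_sorted_sub_le hσ i s t
  obtain ⟨k, h'⟩ := exists_sorted_sub_le hσ i t s
  have h1 := abs_le.1 (hj j)
  have h2 := abs_le.1 (hj k)
  constructor <;> linarith

lemma IsTrajectory.absolutelyContinuous {n : ℕ} {a : Fin n → Fin n → ℝ → ℝ}
    {x : ℝ → Fin n → ℝ} (hx : IsTrajectory n a x) (j : Fin n) {s t : ℝ} (hs : 0 ≤ s)
    (hst : s ≤ t) : AbsolutelyContinuousOnInterval (fun u => x u j) s t := by
  have hint := (hx.2 j t (hs.trans hst)).1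
  have h0 : AbsolutelyContinuousOnInterval
      (fun u => ∫ r in (0:ℝ)..u, ∑ k, a j k r * (x r k - x r j)) 0 t :=
    hint.absolutelyContinuousOnInterval_intervalIntegral Set.left_mem_uIcc
  have h1 : AbsolutelyContinuousOnInterval (fun u => x u j) 0 t := by
    rw [absolutelyContinuousOnInterval_iff] at h0 ⊢
    intro ε hε
    obtain ⟨δ, hδ, h⟩ := h0 ε hε
    refine ⟨δ, hδ, fun E hE hlt => lt_of_le_of_lt (le_of_eq ?_) (h E hE hlt)⟩
    refine Finset.sum_congr rfl fun i hi => ?_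
    have hmem := hE.1 i hi
    rw [Set.uIcc_of_le (hs.trans hst)] at hmem
    rw [(hx.2 j _ hmem.1.1).2, (hx.2 j _ hmem.2.1).2, dist_add_left]
  refine h1.mono ?_
  rw [Set.uIcc_of_le hst, Set.uIcc_of_le (hs.trans hst)]
  exact Set.Icc_subset_Icc_left hs

lemma sorted_absolutelyContinuous {n : ℕ} {a : Fin n → Fin n → ℝ → ℝ}
    {x : ℝ → Fin n → ℝ} (hx : IsTrajectory n a x) {σ : ℝ → Equiv.Perm (Fin n)}
    (hσ : IsSortingPerm n x σ) (i : Fin n) {s t : ℝ} (hs : 0 ≤ s) (hst : s ≤ t) :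
    AbsolutelyContinuousOnInterval (fun u => x u (σ u i)) s t := by
  have hsum : Tendsto (fun E : ℕ × (ℕ → ℝ × ℝ) => ∑ j, ∑ k ∈ Finset.range E.1,
      dist (x (E.2 k).1 j) (x (E.2 k).2 j))
      (AbsolutelyContinuousOnInterval.totalLengthFilter ⊓
        𝓟 (AbsolutelyContinuousOnInterval.disjWithin s t)) (nhds 0) := by
    have := tendsto_finsetSum Finset.univ fun j (_ : j ∈ Finset.univ) =>
      hx.absolutelyContinuous j hs hst
    simpa using this
  refine squeeze_zero (fun E => Finset.sum_nonneg fun k _ => dist_nonneg) (fun E => ?_) hsum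
  rw [Finset.sum_comm]
  exact Finset.sum_le_sum fun k _ => dist_sorted_le hσ i _ _

/-- The sum of the `k` lowest positions is minimal among sums of `k` positions. -/
lemma sum_low_sorted_le {n : ℕ} {x : ℝ → Fin n → ℝ} {σ : ℝ → Equiv.Perm (Fin n)}
    (hσ : IsSortingPerm n x σ) (t : ℝ) (k : ℕ) (π : Equiv.Perm (Fin n)) :
    ∑ i ∈ low n k, x t (σ t i) ≤ ∑ i ∈ low n k, x t (π i) := by
  have hanti : Antitone fun i : Fin n => if (i : ℕ) < k then (1:ℝ) else 0 := by
    intro i j hij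
    have : (i : ℕ) ≤ j := hij
    dsimp only
    split_ifs <;> first | omega | norm_num
  have h := (hanti.antivary (hσ.monotone t)).sum_smul_le_sum_smul_comp_perm
    (σ := π.trans (σ t).symm)
  simpa [low, Finset.sum_filter] using h

/-- Almost everywhere, each order statistic moves with the velocity of the agent that occupies it:
the sum of the `k` lowest positions touches from below the sum over the fixed agents that are the
`k` lowest at the time considered, so the two have the same derivative there. -/
lemma ae_hasDerivAt_sorted {n : ℕ} {a : Fin n → Fin n → ℝ → ℝ}
    {x : ℝ → Fin n → ℝ} (hx : IsTrajectory n a x) {σ : ℝ → Equiv.Perm (Fin n)}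
    (hσ : IsSortingPerm n x σ) {t0 t1 : ℝ} (h0 : 0 ≤ t0) (h01 : t0 ≤ t1) :
    ∀ᵐ s, s ∈ Set.Ioc t0 t1 → ∀ i, HasDerivAt (fun u => x u (σ u i))
      (∑ j, a (σ s i) (σ s j) s * (x s (σ s j) - x s (σ s i))) s := by
  have hxd : ∀ᵐ s, ∀ j, s ∈ Set.Ioc t0 t1 →
      HasDerivAt (fun u => x u j) (∑ k, a j k s * (x s k - x s j)) s := by
    refine ae_all_iff.2 fun j => ?_
    filter_upwards [(hx.2 j t1 (h0.trans h01)).1.ae_hasDerivAt_integral] with s hs hmem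
    have hs0 : 0 < s := h0.trans_lt hmem.1
    rw [Set.uIcc_of_le (h0.trans h01)] at hs
    have h := (hs ⟨hs0.le, hmem.2⟩ 0 ⟨le_rfl, h0.trans h01⟩).const_add (x 0 j)
    refine h.congr_of_eventuallyEq ?_
    filter_upwards [lt_mem_nhds hs0] with u hu
    exact (hx.2 j u hu.le).2
  have hyd : ∀ᵐ s, ∀ i, s ∈ Set.uIcc t0 t1 → DifferentiableAt ℝ (fun u => x u (σ u i)) s :=
    ae_all_iff.2 fun i => (sorted_absolutelyContinuous hx hσ i h0 h01).ae_differentiableAt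
  filter_upwards [hxd, hyd] with s h1 h2 hmem i
  have hmem' : s ∈ Set.uIcc t0 t1 := by
    rw [Set.uIcc_of_le h01]
    exact Set.Ioc_subset_Icc_self hmem
  let v : Fin n → ℝ := fun j => ∑ k, a j k s * (x s k - x s j)
  have hsum : ∀ k, ∑ j ∈ low n k, (v (σ s j) - deriv (fun u => x u (σ u j)) s) = 0 := by
    intro k
    have hd : HasDerivAt (fun u => ∑ j ∈ low n k, (x u (σ s j) - x u (σ u j)))
        (∑ j ∈ low n k, (v (σ s j) - deriv (fun u => x u (σ u j)) s)) s :=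
      HasDerivAt.fun_sum fun j _ => (h1 (σ s j) hmem).sub (h2 j hmem').hasDerivAt
    have hmin : IsLocalMin (fun u => ∑ j ∈ low n k, (x u (σ s j) - x u (σ u j))) s := by
      refine Eventually.of_forall fun u => ?_
      simp only [sub_self, Finset.sum_const_zero, Finset.sum_sub_distrib, sub_nonneg]
      exact sum_low_sorted_le hσ u k (σ s)
    exact hmin.hasDerivAt_eq_zero hd
  have hlow : low n ((i : ℕ) + 1) = insert i (low n i) := by
    ext j
    simp only [mem_low, Finset.mem_insert, Fin.ext_iff]
    omega
  have hi := hsum (i + 1)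
  rw [hlow, Finset.sum_insert (by simp [mem_low]), hsum i, add_zero, sub_eq_zero] at hi
  have hv : v (σ s i) = ∑ j, a (σ s i) (σ s j) s * (x s (σ s j) - x s (σ s i)) :=
    (Equiv.sum_comp (σ s) fun k => a (σ s i) k s * (x s k - x s (σ s i))).symm
  rw [← hv, hi]
  exact (h2 i hmem').hasDerivAt

/-- The weighted sum `∑_{i < l} R^{-(i+1)} y_i` of the `l` lowest positions. -/
noncomputable def wsum {n : ℕ} (x : ℝ → Fin n → ℝ) (σ : ℝ → Equiv.Perm (Fin n)) (R : ℝ) (l : ℕ)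
    (t : ℝ) : ℝ := ∑ i, wt R l i * x t (σ t i)

lemma wsum_absolutelyContinuous {n : ℕ} {a : Fin n → Fin n → ℝ → ℝ}
    {x : ℝ → Fin n → ℝ} (hx : IsTrajectory n a x) {σ : ℝ → Equiv.Perm (Fin n)}
    (hσ : IsSortingPerm n x σ) (R : ℝ) (l : ℕ) {s t : ℝ} (hs : 0 ≤ s) (hst : s ≤ t) :
    AbsolutelyContinuousOnInterval (wsum x σ R l) s t := by
  have h : ∀ F : Finset (Fin n), AbsolutelyContinuousOnInterval
      (fun u => ∑ i ∈ F, wt R l i * x u (σ u i)) s t := by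
    intro F
    induction F using Finset.induction_on with
    | empty =>
      simpa [AbsolutelyContinuousOnInterval] using tendsto_const_nhds
    | insert i F hi ih =>
      simp only [Finset.sum_insert hi]
      exact ((sorted_absolutelyContinuous hx hσ i hs hst).const_mul (wt R l i)).add ih
  exact h Finset.univ

lemma inFlow_sorted {n : ℕ} (a : Fin n → Fin n → ℝ → ℝ) (π : Equiv.Perm (Fin n)) (s : ℝ) (k : ℕ) :
    inFlow (fun i j => a (π i) (π j) s) k =
      ∑ i ∈ (low n k).map π.toEmbedding, ∑ j ∈ ((low n k).map π.toEmbedding)ᶜ, a i j s := by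
  have : ((low n k).map π.toEmbedding)ᶜ = ((low n k)ᶜ).map π.toEmbedding := by
    ext j
    simp [Finset.mem_map_equiv]
  rw [this]
  simp [inFlow, Finset.sum_map]

lemma outFlow_sorted_le {n : ℕ} {a : Fin n → Fin n → ℝ → ℝ} (ha : IsWeight n a) {T : ℝ}
    (hfin : rbold n a T ≠ ⊤) (π : Equiv.Perm (Fin n)) {s : ℝ} (hs : s ∈ Set.Icc 0 T) {k : ℕ}
    (hk : 1 ≤ k) (hkn : k < n) :
    outFlow (fun i j => a (π i) (π j) s) k ≤
      (rbold n a T).toReal * inFlow (fun i j => a (π i) (π j) s) k := by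
  have hmap : ((low n k)ᶜ.map π.toEmbedding)ᶜ = (low n k).map π.toEmbedding := by
    ext j
    simp [Finset.mem_map_equiv]
  have hne : ((low n k)ᶜ.map π.toEmbedding).Nonempty := by
    rw [Finset.map_nonempty]
    exact ⟨⟨k, hkn⟩, by simp [mem_low]⟩
  have hS : (low n k)ᶜ.map π.toEmbedding ≠ Finset.univ := by
    intro h
    rw [h, Finset.compl_univ] at hmap
    refine Finset.Nonempty.ne_empty ?_ hmap.symm
    rw [Finset.map_nonempty]
    exact ⟨⟨0, by omega⟩, by rw [mem_low]; exact hk⟩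
  have h := flow_le_of_rS_le ha hfin (rS_le_rbold (a := a) hne hS hs)
  rw [hmap, Finset.sum_comm, Finset.sum_comm (s := (low n k)ᶜ.map π.toEmbedding)] at h
  simpa [inFlow, outFlow, Finset.sum_map] using h

lemma wsum_mono {n : ℕ} (hn : 2 ≤ n) {a : Fin n → Fin n → ℝ → ℝ} (ha : IsWeight n a)
    {x : ℝ → Fin n → ℝ} (hx : IsTrajectory n a x) {σ : ℝ → Equiv.Perm (Fin n)}
    (hσ : IsSortingPerm n x σ) {T : ℝ} (hfin : rbold n a T ≠ ⊤) (l : ℕ) {s t : ℝ} (hs : 0 ≤ s)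
    (hst : s ≤ t) (htT : t ≤ T) :
    wsum x σ (rbold n a T).toReal l s ≤ wsum x σ (rbold n a T).toReal l t := by
  have hR := one_le_rbold hn ha (hs.trans (hst.trans htT)) hfin
  rw [← sub_nonneg, ← (wsum_absolutelyContinuous hx hσ _ l hs hst).integral_deriv_eq_sub]
  refine intervalIntegral.integral_nonneg_of_ae_restrict hst ?_
  rw [← restrict_Ioc_eq_restrict_Icc, EventuallyLE, ae_restrict_iff' measurableSet_Ioc]
  filter_upwards [ae_hasDerivAt_sorted hx hσ hs hst] with u hu hmem
  have hd : HasDerivAt (wsum x σ (rbold n a T).toReal l) _ u :=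
    HasDerivAt.fun_sum fun i (_ : i ∈ Finset.univ) => (hu hmem i).const_mul _
  rw [hd.deriv]
  exact weighted_nonneg (b := fun i j => a (σ u i) (σ u j) u) (fun i j => (ha _ _).1 u) hR
    (fun k hk hkn => outFlow_sorted_le ha hfin (σ u) ⟨hs.trans hmem.1.le, hmem.2.trans htT⟩ hk hkn)
    l (hσ.monotone u)

/-- If the `l`-th gap stays at least `g` on `[s, t]` and the `l` lowest agents form a fixed set `S`
there, then the weighted sum grows by at least `R^{-l} g` times the total flow into `S`. -/
lemma wsum_growth {n : ℕ} (hn : 2 ≤ n) {a : Fin n → Fin n → ℝ → ℝ} (ha : IsWeight n a)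
    {x : ℝ → Fin n → ℝ} (hx : IsTrajectory n a x) {σ : ℝ → Equiv.Perm (Fin n)}
    (hσ : IsSortingPerm n x σ) {T : ℝ} (hfin : rbold n a T ≠ ⊤) {l : ℕ} (hl : 1 ≤ l)
    (hln : l < n) {s t : ℝ} (hs : 0 ≤ s) (hst : s ≤ t) (htT : t ≤ T) {g : ℝ}
    (hg : ∀ u ∈ Set.Icc s t, g ≤ x u (σ u ⟨l, hln⟩) - x u (σ u ⟨l - 1, by omega⟩))
    {S : Finset (Fin n)}
    (hS : ∀ u ∈ Set.Icc s t, (low n l).map (σ u).toEmbedding = S) :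
    ((rbold n a T).toReal ^ l)⁻¹ * g * cutSum n a S s t ≤
      wsum x σ (rbold n a T).toReal l t - wsum x σ (rbold n a T).toReal l s := by
  have hR := one_le_rbold hn ha (hs.trans (hst.trans htT)) hfin
  have hac := wsum_absolutelyContinuous hx hσ (rbold n a T).toReal l hs hst
  rw [← hac.integral_deriv_eq_sub]
  have hintS : ∀ i, IntervalIntegrable (fun u => ∑ j ∈ Sᶜ, a i j u) volume s t := fun i => by
    simpa only [Finset.sum_fn] using IntervalIntegrable.sum Sᶜ fun j _ =>
      ha.intervalIntegrable i j s t
  have hint : IntervalIntegrable (fun u => ∑ i ∈ S, ∑ j ∈ Sᶜ, a i j u) volume s t := by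
    simpa only [Finset.sum_fn] using IntervalIntegrable.sum S fun i _ => hintS i
  have hcut : cutSum n a S s t = ∫ u in s..t, ∑ i ∈ S, ∑ j ∈ Sᶜ, a i j u := by
    rw [cutSum, intervalIntegral.integral_finsetSum fun i _ => hintS i]
    refine Finset.sum_congr rfl fun i _ => ?_
    rw [intervalIntegral.integral_finsetSum fun j _ => ha.intervalIntegrable i j s t]
  rw [hcut, ← intervalIntegral.integral_const_mul]
  refine intervalIntegral.integral_mono_ae_restrict hst (hint.const_mul _)
    hac.intervalIntegrable_deriv ?_
  rw [← restrict_Ioc_eq_restrict_Icc, EventuallyLE, ae_restrict_iff' measurableSet_Ioc]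
  filter_upwards [ae_hasDerivAt_sorted hx hσ hs hst] with u hu hmem
  have hd : HasDerivAt (wsum x σ (rbold n a T).toReal l) _ u :=
    HasDerivAt.fun_sum fun i (_ : i ∈ Finset.univ) => (hu hmem i).const_mul _
  rw [hd.deriv]
  have hmem' := Set.Ioc_subset_Icc_self hmem
  have key := weighted_ge_gap (b := fun i j => a (σ u i) (σ u j) u) (fun i j => (ha _ _).1 u) hR
    (fun k hk hkn => outFlow_sorted_le ha hfin (σ u) ⟨hs.trans hmem.1.le, hmem.2.trans htT⟩ hk hkn)
    hl hln (hσ.monotone u)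
  refine le_trans ?_ key
  rw [inFlow_sorted, hS u hmem']
  have hnn : 0 ≤ ∑ i ∈ S, ∑ j ∈ Sᶜ, a i j u :=
    Finset.sum_nonneg fun i _ => Finset.sum_nonneg fun j _ => (ha i j).1 u
  have h1 : 0 ≤ ((rbold n a T).toReal ^ l)⁻¹ * ∑ i ∈ S, ∑ j ∈ Sᶜ, a i j u := by positivity
  calc ((rbold n a T).toReal ^ l)⁻¹ * g * ∑ i ∈ S, ∑ j ∈ Sᶜ, a i j u
      = ((rbold n a T).toReal ^ l)⁻¹ * (∑ i ∈ S, ∑ j ∈ Sᶜ, a i j u) * g := by ring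
    _ ≤ _ := mul_le_mul_of_nonneg_left (hg u hmem') h1

/-- While the `l`-th gap stays open, no agent can change sides. -/
lemma low_set_const {n : ℕ} {a : Fin n → Fin n → ℝ → ℝ}
    {x : ℝ → Fin n → ℝ} (hx : IsTrajectory n a x) {σ : ℝ → Equiv.Perm (Fin n)}
    (hσ : IsSortingPerm n x σ) {l : ℕ} (hl : 1 ≤ l)
    (hln : l < n) {s t : ℝ} (hs : 0 ≤ s) (hst : s ≤ t)
    (hg : ∀ u ∈ Set.Icc s t, x u (σ u ⟨l - 1, by omega⟩) < x u (σ u ⟨l, hln⟩)) :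
    ∀ u ∈ Set.Icc s t,
      (low n l).map (σ u).toEmbedding = (low n l).map (σ s).toEmbedding := by
  -- `f j u > 0` means that agent `j` is above the middle of the `l`-th gap at time `u`
  let f : Fin n → ℝ → ℝ := fun j u =>
    2 * x u j - (x u (σ u ⟨l - 1, by omega⟩) + x u (σ u ⟨l, hln⟩))
  have hside : ∀ u ∈ Set.Icc s t, ∀ j,
      (j ∈ (low n l).map (σ u).toEmbedding → f j u < 0) ∧
      (j ∉ (low n l).map (σ u).toEmbedding → 0 < f j u) := by
    intro u hu j
    rw [Finset.mem_map_equiv, mem_low]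
    have hj : x u (σ u ((σ u).symm j)) = x u j := by rw [Equiv.apply_symm_apply]
    constructor
    · intro h
      have h1 := hσ.monotone u (show (σ u).symm j ≤ ⟨l - 1, by omega⟩ by
        rw [Fin.le_def]; simp only; omega)
      simp only [hj] at h1
      simp only [f]
      linarith [hg u hu]
    · intro h
      have h1 := hσ.monotone u (show ⟨l, hln⟩ ≤ (σ u).symm j by
        rw [Fin.le_def]; simp only; omega)
      simp only [hj] at h1
      simp only [f]
      linarith [hg u hu]
  have hfc : ∀ j, ContinuousOn (f j) (Set.Icc s t) := by
    intro j
    have hy : ∀ i, ContinuousOn (fun u => x u (σ u i)) (Set.Icc s t) := fun i => by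
      simpa [Set.uIcc_of_le hst] using (sorted_absolutelyContinuous hx hσ i hs hst).continuousOn
    have hxj : ContinuousOn (fun u => x u j) (Set.Icc s t) :=
      (hx.1 j).mono fun u hu => hs.trans hu.1
    exact (continuousOn_const.mul hxj).sub ((hy _).add (hy _))
  have hne : ∀ j, ∀ u ∈ Set.Icc s t, f j u ≠ 0 := by
    intro j u hu
    by_cases h : j ∈ (low n l).map (σ u).toEmbedding
    · exact ((hside u hu j).1 h).ne
    · exact ((hside u hu j).2 h).ne'
  intro u hu
  have hs' : s ∈ Set.Icc s t := ⟨le_rfl, hst⟩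
  have hsub : Set.Icc s u ⊆ Set.Icc s t := Set.Icc_subset_Icc_right hu.2
  ext j
  constructor
  · intro h
    by_contra h'
    obtain ⟨w, hw, hw0⟩ := intermediate_value_Icc' hu.1 ((hfc j).mono hsub)
      ⟨((hside u hu j).1 h).le, ((hside s hs' j).2 h').le⟩
    exact hne j w (hsub hw) hw0
  · intro h
    by_contra h'
    obtain ⟨w, hw, hw0⟩ := intermediate_value_Icc hu.1 ((hfc j).mono hsub)
      ⟨((hside s hs' j).1 h).le, ((hside u hu j).2 h').le⟩
    exact hne j w (hsub hw) hw0

/-! ### Movement created by a gap -/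

/-- Lemma: quantified movement created by a gap: under persistent
connectivity and finiteness of 𝐫, a gap between sorted positions y_l and y_{l+1}
at time τ ∈ [t_p, t_p^q] produces, for some m ≤ l and some τ' ∈ [t_p, t_p^{q+1}],
a movement y_m(τ') − y_m(τ) ≥ (𝐫(t_{p+1})^{m−(l+1)}/(4n)) (y_{l+1}(τ) − y_l(τ)). -/
theorem stmt15 (n : ℕ) (hn : 2 ≤ n) (a : Fin n → Fin n → ℝ → ℝ) (ha : IsWeight n a)
    (x : ℝ → Fin n → ℝ) (hx : IsTrajectory n a x)
    (σ : ℝ → Equiv.Perm (Fin n)) (hσ : IsSortingPerm n x σ)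
    (hconn : PersistentConn n a)
    (hfin : ∀ t : ℝ, 0 ≤ t → rbold n a t ≠ ⊤)
    (p q : ℕ) (hq : q < n / 2)
    (τ : ℝ) (hτ : τ ∈ Set.Icc (tpSeq n a p) (tpq n a p q))
    (l : ℕ) (hl : 1 ≤ l) (hln : l < n)
    (hgap : x τ (σ τ ⟨l-1, by omega⟩) < x τ (σ τ ⟨l, hln⟩)) :
    ∃ (m : ℕ) (hm : 1 ≤ m ∧ m ≤ l),
      ∃ τ' ∈ Set.Icc (tpSeq n a p) (tpq n a p (q+1)),
        ((rbold n a (tpSeq n a (p+1))).toReal ^ ((m:ℤ) - ((l:ℤ)+1)) / (4*(n:ℝ))) *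
            (x τ (σ τ ⟨l, hln⟩) - x τ (σ τ ⟨l-1, by omega⟩)) ≤
          x τ' (σ τ' ⟨m-1, by omega⟩) - x τ (σ τ ⟨m-1, by omega⟩) := by
  have hmono := le_iterate_nextTime hn ha hconn (tpSeq n a p)
  have hp0 := tpSeq_nonneg hn ha hconn p
  have hτ0 : 0 ≤ τ := hp0.trans hτ.1
  have hq1 : tpq n a p q ≤ tpq n a p (q + 1) := hmono (Nat.le_succ q)
  have hqT : tpq n a p (q + 1) ≤ tpSeq n a (p + 1) := by
    rw [tpSeq_succ]
    exact hmono (show q + 1 ≤ n / 2 by omega)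
  have hτq : τ ≤ tpq n a p (q + 1) := hτ.2.trans hq1
  have hfinT := hfin _ (hτ0.trans (hτq.trans hqT))
  have hR1 := one_le_rbold hn ha (hτ0.trans (hτq.trans hqT)) hfinT
  have hwmono := fun (k : ℕ) {t : ℝ} (h1 : τ ≤ t) (h2 : t ≤ tpq n a p (q + 1)) =>
    wsum_mono hn ha hx hσ hfinT k hτ0 h1 (h2.trans hqT)
  have hgrow := fun {g : ℝ} => wsum_growth hn ha hx hσ hfinT hl hln hτ0 hτq hqT (g := g)
  set R := (rbold n a (tpSeq n a (p + 1))).toReal with hRdef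
  set T := tpq n a p (q + 1) with hT
  set G := x τ (σ τ ⟨l, hln⟩) - x τ (σ τ ⟨l - 1, by omega⟩) with hG
  have hR0 : 0 < R := by linarith
  have hG0 : 0 < G := by rw [hG]; linarith
  have hnR : (2:ℝ) ≤ n := by exact_mod_cast hn
  by_contra! hcon
  -- Under the negation every low position moves little, hence so does the weighted sum.
  have hsmall : ∀ t ∈ Set.Icc τ T, ∀ i : Fin n, (i : ℕ) < l →
      x t (σ t i) - x τ (σ τ i) < (R ^ (l - (i : ℕ)))⁻¹ / (4 * n) * G := by
    intro t ht i hi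
    have h := hcon (i + 1) ⟨by omega, by omega⟩ t ⟨hτ.1.trans ht.1, ht.2⟩
    have he : (((i : ℕ) + 1 : ℕ) : ℤ) - ((l : ℤ) + 1) = -((l - (i : ℕ) : ℕ) : ℤ) := by
      push_cast [Nat.cast_sub hi.le]
      ring
    rw [he, zpow_neg, zpow_natCast] at h
    exact h
  have hwsmall : ∀ t ∈ Set.Icc τ T,
      wsum x σ R l t - wsum x σ R l τ ≤ (R ^ (l + 1))⁻¹ * (G / 4) := by
    intro t ht
    rw [wsum, wsum, ← Finset.sum_sub_distrib]
    calc ∑ i, (wt R l i * x t (σ t i) - wt R l i * x τ (σ τ i))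
        ≤ ∑ _i : Fin n, (R ^ (l + 1))⁻¹ * (G / (4 * n)) := by
          refine Finset.sum_le_sum fun i _ => ?_
          rw [← mul_sub, wt]
          split_ifs with hi
          · have hpow : R ^ (l + 1) = R ^ ((i : ℕ) + 1) * R ^ (l - (i : ℕ)) := by
              rw [← pow_add]
              congr 1
              omega
            calc (R ^ ((i : ℕ) + 1))⁻¹ * (x t (σ t i) - x τ (σ τ i))
                ≤ (R ^ ((i : ℕ) + 1))⁻¹ * ((R ^ (l - (i : ℕ)))⁻¹ / (4 * n) * G) :=
                  mul_le_mul_of_nonneg_left (hsmall t ht i hi).le (by positivity)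
              _ = (R ^ (l + 1))⁻¹ * (G / (4 * n)) := by
                  rw [hpow, mul_inv]
                  ring
          · rw [zero_mul]
            positivity
      _ = (R ^ (l + 1))⁻¹ * (G / 4) := by
          rw [Finset.sum_const, Finset.card_univ, Fintype.card_fin, nsmul_eq_mul]
          field_simp
  -- The weighted sum over `l + 1` positions does not decrease either, so `y_{l+1}` falls by at
  -- most `G / 4`, while `y_l` rises by at most `G / 4`: the gap stays at least `G / 2`.
  have hgap' : ∀ t ∈ Set.Icc τ T,
      G / 2 ≤ x t (σ t ⟨l, hln⟩) - x t (σ t ⟨l - 1, by omega⟩) := by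
    intro t ht
    have hsucc : ∀ u, wsum x σ R (l + 1) u =
        wsum x σ R l u + (R ^ (l + 1))⁻¹ * x u (σ u ⟨l, hln⟩) := by
      intro u
      have hsplit : ∀ i : Fin n, wt R (l + 1) i * x u (σ u i) = wt R l i * x u (σ u i) +
          if i = ⟨l, hln⟩ then (R ^ (l + 1))⁻¹ * x u (σ u ⟨l, hln⟩) else 0 := by
        intro i
        by_cases hi : i = ⟨l, hln⟩
        · subst hi
          simp [wt]
        · have hi' : (i : ℕ) ≠ l := fun h => hi (Fin.ext h)
          have : ((i : ℕ) < l + 1) ↔ (i : ℕ) < l := by omega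
          simp [wt, hi, this]
      simp only [wsum, hsplit, Finset.sum_add_distrib, Finset.sum_ite_eq', Finset.mem_univ,
        if_true]
    have h1 := hwmono (l + 1) ht.1 ht.2
    rw [hsucc, hsucc] at h1
    have h2 : (R ^ (l + 1))⁻¹ * x τ (σ τ ⟨l, hln⟩) ≤
        (R ^ (l + 1))⁻¹ * (x t (σ t ⟨l, hln⟩) + G / 4) := by
      linarith [hwsmall t ht]
    have h3 := le_of_mul_le_mul_left h2 (by positivity)
    have h4 := hsmall t ht ⟨l - 1, by omega⟩ (by simp only; omega)
    have h5 : (R ^ (l - (l - 1)))⁻¹ / (4 * (n:ℝ)) * G ≤ G / 4 := by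
      have : (R ^ (l - (l - 1)))⁻¹ ≤ 1 := inv_le_one_of_one_le₀ (one_le_pow₀ hR1)
      rw [div_mul_eq_mul_div, div_le_div_iff₀ (by positivity) (by norm_num)]
      nlinarith
    simp only at h4
    linarith
  have hconst := low_set_const hx hσ hl hln hτ0 hτq fun t ht => by
    linarith [hgap' t ht]
  have hg := hgrow hgap' hconst
  set S := (low n l).map (σ τ).toEmbedding with hSdef
  have hSne : S.Nonempty := by
    rw [hSdef, Finset.map_nonempty]
    exact ⟨⟨0, by omega⟩, by rw [mem_low]; exact hl⟩
  have hSu : S ≠ Finset.univ := by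
    intro h
    have := Finset.mem_univ (σ τ ⟨l, hln⟩)
    rw [← h, hSdef, Finset.mem_map_equiv, mem_low] at this
    simp at this
  have hcut : 1 ≤ cutSum n a S τ T := by
    have hspec := nextTime_spec hn ha hconn (tpq n a p q)
    have hTeq : nextTime n a (tpq n a p q) = T := by
      rw [hT, tpq, tpq, Function.iterate_succ_apply']
    rw [hTeq] at hspec
    calc (1:ℝ) = minCut n a (tpq n a p q) T := hspec.2.symm
      _ ≤ cutSum n a S (tpq n a p q) T := minCut_le hSne hSu _ _
      _ ≤ cutSum n a S τ T := cutSum_mono ha S hτ.2 hspec.1 le_rfl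
  -- The growth over `[τ, T]` is at least `R^{-l} G / 2`, against the bound `R^{-(l+1)} G / 4`.
  have hlow : (R ^ l)⁻¹ * (G / 2) ≤ (R ^ l)⁻¹ * (G / 2) * cutSum n a S τ T :=
    le_mul_of_one_le_right (by positivity) hcut
  have hup := hwsmall T ⟨hτq, le_rfl⟩
  have hRpow : (R ^ (l + 1))⁻¹ ≤ (R ^ l)⁻¹ :=
    inv_anti₀ (by positivity) (pow_le_pow_right₀ hR1 (Nat.le_succ l))
  have hfinal : (R ^ (l + 1))⁻¹ * (G / 4) ≤ (R ^ l)⁻¹ * (G / 4) :=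
    mul_le_mul_of_nonneg_right hRpow (by positivity)
  have hpos : 0 < (R ^ l)⁻¹ * G := by positivity
  linarith
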